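/- Let p, p' ∈ ℤ² with p.x ≤ p'.x and let ≺, ≺' be linear orders on ℤ such that no two integers form a bad pair for (≺,p) and (≺',p'). Then for every q ∈ Q¹_p and q' ∈ Q¹_{p'}, the pair of digital segments (R(≺,p,q), R(≺',p',q')) has no witness to the violation of (S3), and neither does the pair (R(≺',p',q'), R(≺,p,q)). -/

import Mathlib

open scoped Classical

/-- Points of the digital plane. -/
abbrev Pt : Type := ℤ × ℤ

/-- `q` lies in the closed first quadrant of `p`. -/
def Quad1 (p q : Pt) : Prop := p.1 ≤ q.1 ∧ p.2 ≤ q.2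

/-- The number of elements `y` of the finite set `J` with `y ≺ x` or `y = x`. -/
noncomputable def rankLE (lt : ℤ → ℤ → Prop) (J : Finset ℤ) (x : ℤ) : ℤ :=
  ((J.filter fun y => lt y x ∨ y = x).card : ℤ)

/-- `x` is among the `k` smallest elements of `J` with respect to the linear order `lt`. -/
def AmongSmallest (lt : ℤ → ℤ → Prop) (J : Finset ℤ) (k x : ℤ) : Prop :=
  x ∈ J ∧ rankLE lt J x ≤ k

/-- The interval `I(p,q) = [p.x+p.y, q.x+q.y-1]`. -/
noncomputable def Ival (p q : Pt) : Finset ℤ := Finset.Icc (p.1 + p.2) (q.1 + q.2 - 1)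

/-- Membership in `H(lt,p,q)`: the `q.x - p.x` smallest elements of `I(p,q)` w.r.t. `lt`. -/
def Hmem (lt : ℤ → ℤ → Prop) (p q : Pt) (a : ℤ) : Prop :=
  AmongSmallest lt (Ival p q) (q.1 - p.1) a

/-- The digital segment `R(lt,p,q)` for `q ∈ Q¹_p`, generated by the linear order `lt`. -/
noncomputable def seg (lt : ℤ → ℤ → Prop) (p q : Pt) : Set Pt :=
  {r : Pt | p.1 ≤ r.1 ∧ r.1 ≤ q.1 ∧ p.2 ≤ r.2 ∧ r.2 ≤ q.2 ∧
    p.1 + p.2 ≤ r.1 + r.2 ∧ r.1 + r.2 ≤ q.1 + q.2 ∧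
    r.1 - p.1 =
      (((Finset.Icc (p.1 + p.2) (r.1 + r.2 - 1)).filter fun a => Hmem lt p q a).card : ℤ)}

/-- `(t₁,t₂)` is a witness to the violation of (S3) for the pair of sets `(S,S')`. -/
def Witness (S S' : Set Pt) (t₁ t₂ : Pt) : Prop :=
  t₁ ∈ S ∧ t₁ ∈ S' ∧ t₂ ∈ S ∧ t₂ ∈ S' ∧
  t₁.1 + t₁.2 < t₂.1 + t₂.2 ∧
  ((t₁.1 + 1, t₁.2) : Pt) ∈ S ∧ ((t₁.1, t₁.2 + 1) : Pt) ∈ S' ∧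
  ((t₂.1, t₂.2 - 1) : Pt) ∈ S ∧ ((t₂.1 - 1, t₂.2) : Pt) ∈ S'

/-- `a ≠ b` form a bad pair for `(lt,p)` and `(lt',p')`, where `p.x ≤ p'.x`. -/
def BadPair (lt lt' : ℤ → ℤ → Prop) (p p' : Pt) (a b : ℤ) : Prop :=
  a ≠ b ∧ ∃ C ℓ : ℤ, p.1 + p.2 ≤ C ∧ p'.1 + p'.2 ≤ C ∧
    a ∈ Finset.Icc (p.1 + p.2) (C - 1) ∧ b ∈ Finset.Icc (p.1 + p.2) (C - 1) ∧
    a ∈ Finset.Icc (p'.1 + p'.2) (C - 1) ∧ b ∈ Finset.Icc (p'.1 + p'.2) (C - 1) ∧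
    AmongSmallest lt (Finset.Icc (p.1 + p.2) (C - 1)) ℓ a ∧
    ¬ AmongSmallest lt (Finset.Icc (p.1 + p.2) (C - 1)) ℓ b ∧
    AmongSmallest lt' (Finset.Icc (p'.1 + p'.2) (C - 1)) (ℓ - (p'.1 - p.1)) b ∧
    ¬ AmongSmallest lt' (Finset.Icc (p'.1 + p'.2) (C - 1)) (ℓ - (p'.1 - p.1)) a

/-- Bad pair for arbitrary `p, p'`: for `p.x > p'.x` the roles of `p` and `p'` are exchanged. -/
def BadPairSym (lt lt' : ℤ → ℤ → Prop) (p p' : Pt) (a b : ℤ) : Prop :=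
  (p.1 ≤ p'.1 ∧ BadPair lt lt' p p' a b) ∨ (p'.1 ≤ p.1 ∧ BadPair lt' lt p' p a b)

/-- Adjacency in the unit grid graph on `ℤ²`. -/
def GridAdj (u v : Pt) : Prop := |u.1 - v.1| + |u.2 - v.2| = 1

/-- `S` is the vertex set of a path from `p` to `q` in the unit grid graph. -/
def IsGridPath (S : Set Pt) (p q : Pt) : Prop :=
  ∃ (n : ℕ) (f : ℕ → Pt), f 0 = p ∧ f n = q ∧
    (∀ i, i < n → GridAdj (f i) (f (i + 1))) ∧
    (∀ i j, i ≤ n → j ≤ n → f i = f j → i = j) ∧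
    S = {r : Pt | ∃ i, i ≤ n ∧ f i = r}

/-- The pair `p, q` has nonnegative slope. -/
def NonnegPair (p q : Pt) : Prop := (p.1 ≤ q.1 ∧ p.2 ≤ q.2) ∨ (q.1 ≤ p.1 ∧ q.2 ≤ p.2)

/-- A nonnegative-slope digital segment system `R` is a CDS: properties (S1)-(S5). -/
def IsCDS (R : Pt → Pt → Set Pt) : Prop :=
  ∀ p q : Pt, NonnegPair p q →
    IsGridPath (R p q) p q ∧
    R p q = R q p ∧
    (∀ r s : Pt, r ∈ R p q → s ∈ R p q → NonnegPair r s → R r s ⊆ R p q) ∧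
    (∃ r : Pt, r ∉ R p q ∧ NonnegPair p r ∧ R p q ⊆ R p r) ∧
    (p.1 = q.1 → ∀ r ∈ R p q, r.1 = p.1) ∧
    (p.2 = q.2 → ∀ r ∈ R p q, r.2 = p.2)

/-- The nonnegative-slope digital segment system generated by an assignment of
linear orders to the points of `ℤ²`. -/
noncomputable def genR (ord : Pt → ℤ → ℤ → Prop) (p q : Pt) : Set Pt :=
  if p.1 ≤ q.1 ∧ p.2 ≤ q.2 then seg (ord p) p q else seg (ord q) q p

/-- The orders `lt` at `p` and `lt'` at `p'` are in agreement. -/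
def Agree (p p' : Pt) (lt lt' : ℤ → ℤ → Prop) : Prop :=
  ∀ a b : ℤ, max p.1 p'.1 + max p.2 p'.2 ≤ a → max p.1 p'.1 + max p.2 p'.2 ≤ b →
    (lt a b ↔ lt' a b)

/-- Two digital segments are smooth: the antidiagonal distance function is
monotonically nondecreasing or nonincreasing on its domain. -/
def SmoothPair (S S' : Set Pt) : Prop :=
  (∀ r₁ s₁ r₂ s₂ : Pt, r₁ ∈ S → s₁ ∈ S' → r₂ ∈ S → s₂ ∈ S' →
      r₁.1 + r₁.2 = s₁.1 + s₁.2 → r₂.1 + r₂.2 = s₂.1 + s₂.2 →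
      r₁.1 + r₁.2 ≤ r₂.1 + r₂.2 → r₁.1 - s₁.1 ≤ r₂.1 - s₂.1) ∨
  (∀ r₁ s₁ r₂ s₂ : Pt, r₁ ∈ S → s₁ ∈ S' → r₂ ∈ S → s₂ ∈ S' →
      r₁.1 + r₁.2 = s₁.1 + s₁.2 → r₂.1 + r₂.2 = s₂.1 + s₂.2 →
      r₁.1 + r₁.2 ≤ r₂.1 + r₂.2 → r₂.1 - s₂.1 ≤ r₁.1 - s₁.1)

/-- The waterline assignment of linear orders. -/
def waterOrd (p : Pt) : ℤ → ℤ → Prop := fun a b =>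
  if 0 ≤ p.2 then a < b
  else (p.1 ≤ a ∧ p.1 ≤ b ∧ a < b) ∨ (p.1 ≤ a ∧ b < p.1) ∨ (a < p.1 ∧ b < p.1 ∧ b < a)

/-- `p₃` has a conflicting priority with respect to `(lt,p)` and `(lt',p')`. -/
def ConflictPriority (lt lt' : ℤ → ℤ → Prop) (p p' p₃ : Pt) : Prop :=
  ∃ a b : ℤ, a ∈ Ival p p₃ ∧ a ∈ Ival p' p₃ ∧ b ∈ Ival p p₃ ∧ b ∈ Ival p' p₃ ∧
    Hmem lt p p₃ b ∧ ¬ Hmem lt p p₃ a ∧ Hmem lt' p' p₃ a ∧ ¬ Hmem lt' p' p₃ b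

/-!
If `r` lies on `R(≺,p,q)`, then the horizontal steps of the segment before `r` are exactly
the `r.x - p.x` smallest elements of `I(p,r)`, so on `I(p,r)` one may replace `q` by `r`. Applied to
both segments of a witness `(t₁,t₂)` with `r = t₂`, this shows that the antidiagonals
`t₁.x + t₁.y` and `t₂.x + t₂.y - 1` receive opposite priorities in `I(p,t₂)` and in `I(p',t₂)`,
so `t₂` has a conflicting priority. As `t₂.x - p'.x = (t₂.x - p.x) - (p'.x - p.x)`, the two
antidiagonals form a bad pair with `C = t₂.x + t₂.y` and `ℓ = t₂.x - p.x`.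
-/

section Rank

variable {lt : ℤ → ℤ → Prop} {J : Finset ℤ} {a b k : ℤ}

lemma rankLE_mono [IsTrans ℤ lt] (hab : lt a b) : rankLE lt J a ≤ rankLE lt J b := by
  refine Nat.cast_le.mpr (Finset.card_le_card (Finset.monotone_filter_right J fun y _ hy => ?_))
  rcases hy with hya | rfl
  · exact Or.inl (trans_of lt hya hab)
  · exact Or.inl hab

lemma AmongSmallest.of_lt [IsTrans ℤ lt] (hb : AmongSmallest lt J k b) (ha : a ∈ J)
    (hab : lt a b) : AmongSmallest lt J k a :=
  ⟨ha, (rankLE_mono hab).trans hb.2⟩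

lemma rankLE_le_card_filter_iff [Std.Trichotomous lt] {P : ℤ → Prop}
    (hP : ∀ x ∈ J, ∀ y ∈ J, lt y x → P x → P y) (ha : a ∈ J) :
    rankLE lt J a ≤ ((J.filter P).card : ℤ) ↔ P a := by
  rw [rankLE, Nat.cast_le]
  constructor
  · contrapose!
    intro hPa
    refine Finset.card_lt_card ((Finset.ssubset_iff_of_subset ?_).mpr
      ⟨a, by simp [ha], by simp [hPa]⟩)
    refine Finset.monotone_filter_right J fun y hy hPy => ?_
    rcases trichotomous_of lt y a with hya | hya | hay
    · exact Or.inl hya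
    · exact Or.inr hya
    · exact absurd (hP y hy a ha hay hPy) hPa
  · intro hPa
    refine Finset.card_le_card fun y hy => ?_
    obtain ⟨hyJ, hya | rfl⟩ := Finset.mem_filter.mp hy
    · exact Finset.mem_filter.mpr ⟨hyJ, hP a ha y hyJ hya hPa⟩
    · exact Finset.mem_filter.mpr ⟨hyJ, hPa⟩

end Rank

lemma card_filter_Icc_eq_add_ite {P : ℤ → Prop} {m n : ℤ} (hmn : m ≤ n) :
    (((Finset.Icc m n).filter P).card : ℤ) =
      ((Finset.Icc m (n - 1)).filter P).card + if P n then 1 else 0 := by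
  rw [← Finset.insert_Icc_sub_one_right_eq_Icc hmn, Finset.filter_insert]
  split_ifs with hPn
  · rw [Finset.card_insert_of_notMem (by simp), Nat.cast_succ]
  · simp

section Segment

variable {lt lt' : ℤ → ℤ → Prop} {p p' q q' r s t₁ t₂ : Pt} {a c : ℤ}

lemma Ival_subset_Ival (hrq : r.1 + r.2 ≤ q.1 + q.2) : Ival p r ⊆ Ival p q :=
  Finset.Icc_subset_Icc_right (by omega)

lemma hmem_iff_hmem_of_mem_seg [IsTrans ℤ lt] [Std.Trichotomous lt] (hr : r ∈ seg lt p q)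
    (ha : a ∈ Ival p r) : Hmem lt p r a ↔ Hmem lt p q a := by
  obtain ⟨-, -, -, -, -, hrq, hcard⟩ := hr
  have hdown : ∀ x ∈ Ival p r, ∀ y ∈ Ival p r, lt y x → Hmem lt p q x → Hmem lt p q y :=
    fun x _ y hy hyx hx => AmongSmallest.of_lt hx (Ival_subset_Ival hrq hy) hyx
  calc Hmem lt p r a ↔ rankLE lt (Ival p r) a ≤ r.1 - p.1 := and_iff_right ha
    _ ↔ Hmem lt p q a := by rw [hcard]; exact rankLE_le_card_filter_iff hdown ha

lemma hmem_iff_fst_eq_add_one (hr : r ∈ seg lt p q) (hs : s ∈ seg lt p q)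
    (hrc : r.1 + r.2 = c) (hsc : s.1 + s.2 = c + 1) : Hmem lt p q c ↔ s.1 = r.1 + 1 := by
  obtain ⟨-, -, -, -, hpr, -, hrcard⟩ := hr
  obtain ⟨-, -, -, -, -, -, hscard⟩ := hs
  rw [hrc] at hpr hrcard
  rw [hsc, add_sub_cancel_right, card_filter_Icc_eq_add_ite hpr, ← hrcard] at hscard
  split_ifs at hscard with hHc
  · exact iff_of_true hHc (by linarith)
  · exact iff_of_false hHc (by linarith)

lemma ConflictPriority.symm (h : ConflictPriority lt lt' p p' r) :
    ConflictPriority lt' lt p' p r := by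
  obtain ⟨a, b, ha, ha', hb, hb', hHb, hHa, hHa', hHb'⟩ := h
  exact ⟨b, a, hb', hb, ha', ha, hHa', hHb', hHb, hHa⟩

lemma ConflictPriority.exists_badPair (h : ConflictPriority lt lt' p p' r) :
    ∃ a b, BadPair lt lt' p p' a b := by
  obtain ⟨a, b, ha, ha', hb, hb', hHb, hHa, hHa', hHb'⟩ := h
  have hne : b ≠ a := fun hba => hHa (hba ▸ hHb)
  have hshift : r.1 - p.1 - (p'.1 - p.1) = r.1 - p'.1 := by ring
  have hC : p.1 + p.2 ≤ r.1 + r.2 := by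
    have := Finset.mem_Icc.mp ha
    omega
  have hC' : p'.1 + p'.2 ≤ r.1 + r.2 := by
    have := Finset.mem_Icc.mp ha'
    omega
  refine ⟨b, a, hne, r.1 + r.2, r.1 - p.1, hC, hC', hb, ha, hb', ha', hHb, hHa, ?_, ?_⟩ <;>
    rw [hshift]
  · exact hHa'
  · exact hHb'

lemma Witness.conflictPriority [IsTrans ℤ lt] [Std.Trichotomous lt] [IsTrans ℤ lt']
    [Std.Trichotomous lt'] (hw : Witness (seg lt p q) (seg lt' p' q') t₁ t₂) :
    ConflictPriority lt lt' p p' t₂ := by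
  obtain ⟨h₁, h₁', h₂, h₂', hlt, hright, hup, hdown, hleft⟩ := hw
  have hfirst : ∀ {u : Pt}, u.1 + u.2 ≤ t₁.1 + t₁.2 → t₁.1 + t₁.2 ∈ Ival u t₂ :=
    fun hu => Finset.mem_Icc.mpr ⟨hu, by omega⟩
  have hlast : ∀ {u : Pt}, u.1 + u.2 ≤ t₁.1 + t₁.2 → t₂.1 + t₂.2 - 1 ∈ Ival u t₂ :=
    fun hu => Finset.mem_Icc.mpr ⟨by omega, le_rfl⟩
  have hp := h₁.2.2.2.2.1
  have hp' := h₁'.2.2.2.2.1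
  refine ⟨t₂.1 + t₂.2 - 1, t₁.1 + t₁.2, hlast hp, hlast hp', hfirst hp, hfirst hp', ?_, ?_, ?_, ?_⟩
  · rw [hmem_iff_hmem_of_mem_seg h₂ (hfirst hp),
      hmem_iff_fst_eq_add_one h₁ hright rfl (by ring)]
  · rw [hmem_iff_hmem_of_mem_seg h₂ (hlast hp),
      hmem_iff_fst_eq_add_one hdown h₂ (by ring) (by ring)]
    exact (lt_add_one t₂.1).ne
  · rw [hmem_iff_hmem_of_mem_seg h₂' (hlast hp'),
      hmem_iff_fst_eq_add_one hleft h₂' (by ring) (by ring)]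
    ring
  · rw [hmem_iff_hmem_of_mem_seg h₂' (hfirst hp'),
      hmem_iff_fst_eq_add_one h₁' hup rfl (by ring)]
    exact (lt_add_one t₁.1).ne

end Segment

theorem statement5_general (p p' : Pt) (lt lt' : ℤ → ℤ → Prop)
    [IsTrans ℤ lt] [Std.Trichotomous lt] [IsTrans ℤ lt'] [Std.Trichotomous lt']
    (hnb : ∀ a b : ℤ, ¬ BadPair lt lt' p p' a b) (q q' : Pt) :
    (¬ ∃ t₁ t₂ : Pt, Witness (seg lt p q) (seg lt' p' q') t₁ t₂) ∧
    (¬ ∃ t₁ t₂ : Pt, Witness (seg lt' p' q') (seg lt p q) t₁ t₂) := by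
  have hno_conflict : ∀ r, ¬ ConflictPriority lt lt' p p' r := fun r hr =>
    have ⟨a, b, hab⟩ := hr.exists_badPair
    hnb a b hab
  constructor
  · rintro ⟨t₁, t₂, hw⟩
    exact hno_conflict t₂ hw.conflictPriority
  · rintro ⟨t₁, t₂, hw⟩
    exact hno_conflict t₂ hw.conflictPriority.symm

/-- if `(≺,p)` and `(≺',p')` have no bad pair, then no pair of digital
segments `R(≺,p,q)`, `R(≺',p',q')` (in either order) has a witness to the
violation of (S3). -/
theorem statement5 (p p' : Pt) (hx : p.1 ≤ p'.1) (lt lt' : ℤ → ℤ → Prop)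
    [IsStrictTotalOrder ℤ lt] [IsStrictTotalOrder ℤ lt']
    (hnb : ∀ a b : ℤ, ¬ BadPair lt lt' p p' a b)
    (q q' : Pt) (hq : Quad1 p q) (hq' : Quad1 p' q') :
    (¬ ∃ t₁ t₂ : Pt, Witness (seg lt p q) (seg lt' p' q') t₁ t₂) ∧
    (¬ ∃ t₁ t₂ : Pt, Witness (seg lt' p' q') (seg lt p q) t₁ t₂) :=
  statement5_general p p' lt lt' hnb q q'
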